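/- arXiv:2301.07387 — 4 statements merged into one kernel-verified Lean document; each statement's English description precedes it below -/
import Mathlib

section
/- Let τ = (−1 − i·√7)/2 and let p = 8 or p = 12. Then the lattice S(p,τ) is generated by the union of two mirror stabilizers: the subgroup of GL(3,ℂ) generated by Stab(m₁) ∪ Stab(m₂) equals S(p,τ), where m₁ is the mirror of the complex reflection R₁ and m₂ = span_ℂ{e₁, R₂·e₃} is the mirror of the complex reflection (R₁·R₂R₃R₂⁻¹)³. -/
open Matrix

noncomputable section

/-- `u = exp(2πi/(3p))`. -/
def uPar (p : ℕ) : ℂ := Complex.exp (2 * Real.pi * Complex.I / (3 * p))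

/-- `α = 2 − u³ − conj(u)³`. -/
def alphaPar (p : ℕ) : ℂ :=
  2 - uPar p ^ 3 - starRingEnd ℂ (uPar p) ^ 3

/-- `β = (conj(u)² − u)·τ`. -/
def betaPar (p : ℕ) (τ : ℂ) : ℂ := (starRingEnd ℂ (uPar p) ^ 2 - uPar p) * τ

/-- The generator `R₁` of `S(p,τ)`. -/
def R1S (p : ℕ) (τ : ℂ) : Matrix (Fin 3) (Fin 3) ℂ :=
  !![uPar p ^ 2, τ, -(uPar p) * starRingEnd ℂ τ;
     0, starRingEnd ℂ (uPar p), 0;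
     0, 0, starRingEnd ℂ (uPar p)]

/-- The reflection `R₂ = J·R₁·J⁻¹` of `S(p,τ)`. -/
def R2S (p : ℕ) (τ : ℂ) : Matrix (Fin 3) (Fin 3) ℂ :=
  !![starRingEnd ℂ (uPar p), 0, 0;
     -(uPar p) * starRingEnd ℂ τ, uPar p ^ 2, τ;
     0, 0, starRingEnd ℂ (uPar p)]

/-- The reflection `R₃ = J·R₂·J⁻¹` of `S(p,τ)`. -/
def R3S (p : ℕ) (τ : ℂ) : Matrix (Fin 3) (Fin 3) ℂ :=
  !![starRingEnd ℂ (uPar p), 0, 0;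
     0, starRingEnd ℂ (uPar p), 0;
     τ, -(uPar p) * starRingEnd ℂ τ, uPar p ^ 2]

/-- The cyclic permutation matrix `J`. -/
def Jmat : Matrix (Fin 3) (Fin 3) ℂ :=
  !![0, 0, 1; 1, 0, 0; 0, 1, 0]

/-- The linear functional `x ↦ a·x₁ + b·x₂ + c·x₃` on `ℂ³`. -/
def lfun (a b c : ℂ) : (Fin 3 → ℂ) →ₗ[ℂ] ℂ :=
  a • (LinearMap.proj 0 : (Fin 3 → ℂ) →ₗ[ℂ] ℂ) +
    b • (LinearMap.proj 1 : (Fin 3 → ℂ) →ₗ[ℂ] ℂ) +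
    c • (LinearMap.proj 2 : (Fin 3 → ℂ) →ₗ[ℂ] ℂ)

/-- The mirror of `R₁`: `{x ∈ ℂ³ : α·x₁ + β·x₂ + conj(β)·x₃ = 0}`,
the `H`-orthogonal complement of `e₁`. -/
def mirror1 (p : ℕ) (τ : ℂ) : Submodule ℂ (Fin 3 → ℂ) :=
  LinearMap.ker (lfun (alphaPar p) (betaPar p τ) (starRingEnd ℂ (betaPar p τ)))

/-- The stabilizer of a subspace `m` of `ℂ³` inside a subgroup `S` of `GL(3,ℂ)`:
the set of elements of `S` mapping `m` onto itself. -/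
def mirrorStab (S : Subgroup (GL (Fin 3) ℂ)) (m : Submodule ℂ (Fin 3 → ℂ)) :
    Set (GL (Fin 3) ℂ) :=
  {g | g ∈ S ∧ m.map (Matrix.mulVecLin (g : Matrix (Fin 3) (Fin 3) ℂ)) = m}

end

lemma stab_of_vecMul (S : Subgroup (GL (Fin 3) ℂ)) (g : GL (Fin 3) ℂ) (hg : g ∈ S)
    (n0 n1 n2 : ℂ) (c : ℂ) (hc : c ≠ 0)
    (h : ![n0, n1, n2] ᵥ* (g : Matrix (Fin 3) (Fin 3) ℂ) = c • ![n0, n1, n2]) :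
    g ∈ mirrorStab S (LinearMap.ker (lfun n0 n1 n2)) := by
  have hl : ∀ x, lfun n0 n1 n2 x = ![n0, n1, n2] ⬝ᵥ x := by
    intro x
    simp [lfun, dotProduct, Fin.sum_univ_three]
  refine ⟨hg, ?_⟩
  ext x
  simp only [Submodule.mem_map, LinearMap.mem_ker, hl, Matrix.mulVecLin_apply]
  constructor
  · rintro ⟨y, hy, rfl⟩
    rw [Matrix.dotProduct_mulVec, h, smul_dotProduct, hy, smul_zero]
  · intro hx
    have e : (g : Matrix (Fin 3) (Fin 3) ℂ) *ᵥ
        (((g⁻¹ : GL (Fin 3) ℂ) : Matrix (Fin 3) (Fin 3) ℂ) *ᵥ x) = x := by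
      rw [Matrix.mulVec_mulVec, ← Units.val_mul]
      simp
    refine ⟨_, ?_, e⟩
    have h2 := hx
    rw [← e, Matrix.dotProduct_mulVec, h, smul_dotProduct, smul_eq_mul] at h2
    exact (mul_eq_zero.mp h2).resolve_left hc

lemma u_mul_conj (p : ℕ) : uPar p * starRingEnd ℂ (uPar p) = 1 := by
  rw [Complex.mul_conj, Complex.normSq_eq_norm_sq]
  have : ‖uPar p‖ = 1 := by
    unfold uPar
    have : (2 * Real.pi * Complex.I / (3 * p) : ℂ)
        = ((2 * Real.pi / (3 * p) : ℝ) : ℂ) * Complex.I := by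
      push_cast
      ring
    rw [this, Complex.norm_exp_ofReal_mul_I]
  rw [this]
  simp

set_option maxHeartbeats 4000000

/-- For `τ = (−1−i√7)/2` and `p = 8` or `12`, the lattice `S(p,τ)` is generated by
the union of the stabilizers of the mirror of `R₁` and of the mirror
`span{e₁, R₂·e₃}` of the complex reflection `(R₁·R₂R₃R₂⁻¹)³`. -/
theorem stmt12 (p : ℕ) (hp : p = 8 ∨ p = 12)
    (τ : ℂ) (hτ : τ = (-1 - Complex.I * Real.sqrt 7) / 2)
    (r₁ j : GL (Fin 3) ℂ)
    (hr₁ : (↑r₁ : Matrix (Fin 3) (Fin 3) ℂ) = R1S p τ)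
    (hj : (↑j : Matrix (Fin 3) (Fin 3) ℂ) = Jmat) :
    Subgroup.closure
        (mirrorStab (Subgroup.closure {r₁, j}) (mirror1 p τ) ∪
          mirrorStab (Subgroup.closure {r₁, j})
            (Submodule.span ℂ
              {Pi.single 0 1, (R2S p τ).mulVec (Pi.single 2 1)})) =
      Subgroup.closure {r₁, j} := by
  have huv := u_mul_conj p
  have htT : starRingEnd ℂ τ = -1 - τ := by
    subst hτ
    simp only [map_div₀, map_sub, map_neg, map_one, map_mul, Complex.conj_I, Complex.conj_ofReal,
      map_ofNat]
    ring
  have ht2 : τ ^ 2 = -τ - 2 := by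
    have h7 : ((Real.sqrt 7 : ℝ) : ℂ) ^ 2 = 7 := by
      rw [← Complex.ofReal_pow, Real.sq_sqrt (by norm_num)]
      norm_num
    subst hτ
    linear_combination (Complex.I ^ 2 / 4) * h7 + (7 / 4) * Complex.I_sq
  have hα : alphaPar p = 2 - uPar p ^ 3 - starRingEnd ℂ (uPar p) ^ 3 := rfl
  have hβ : betaPar p τ = (starRingEnd ℂ (uPar p) ^ 2 - uPar p) * τ := rfl
  have hβ' : starRingEnd ℂ (betaPar p τ) = (uPar p ^ 2 - starRingEnd ℂ (uPar p)) * (-1 - τ) := by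
    rw [hβ, map_mul, map_sub, map_pow, htT, Complex.conj_conj]
  have hm1 : mirror1 p τ =
      LinearMap.ker (lfun (alphaPar p) (betaPar p τ) (starRingEnd ℂ (betaPar p τ))) := rfl
  rw [hβ', hα, hβ] at hm1
  have hR1 := hr₁
  unfold R1S at hR1
  have hR2 : R2S p τ = R2S p τ := rfl
  conv_rhs at hR2 => unfold R2S
  rw [htT] at hR1 hR2
  rw [hm1, hR2]
  clear hm1 hβ' hβ hα hr₁ hR2
  clear hτ htT hp
  generalize starRingEnd ℂ (uPar p) = v at *
  generalize uPar p = u at *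
  have hu : u ≠ 0 := left_ne_zero_of_mul_eq_one huv
  have hv : v ≠ 0 := right_ne_zero_of_mul_eq_one huv
  -- span as kernel
  have hm2 : Submodule.span ℂ {Pi.single 0 1,
      (!![v, 0, 0; -u * (-1 - τ), u ^ 2, τ; 0, 0, v] : Matrix (Fin 3) (Fin 3) ℂ).mulVec
        (Pi.single 2 1)} = LinearMap.ker (lfun 0 v (-τ)) := by
    ext x
    rw [Submodule.mem_span_pair, LinearMap.mem_ker]
    constructor
    · rintro ⟨a, b, rfl⟩
      simp [lfun]
      ring
    · intro hx
      simp [lfun] at hx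
      refine ⟨x 0, u * x 2, ?_⟩
      funext i
      fin_cases i
      · simp
      · simp
        linear_combination (-u) * hx + (x 1) * huv
      · simp
        linear_combination (x 2) * huv
  rw [hm2]
  clear hm2
  set S := Subgroup.closure {r₁, j} with hS
  have hr₁S : r₁ ∈ S := Subgroup.subset_closure (by simp)
  have hjS : j ∈ S := Subgroup.subset_closure (by simp)
  unfold Jmat at hj
  -- inverse of j
  have hj3 : j * j * j = 1 := by
    apply Units.ext
    simp only [Units.val_mul, hj, Units.val_one]
    ext a b
    fin_cases a <;> fin_cases b <;> simp [Matrix.mul_apply, Fin.sum_univ_three]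
  have hji : j⁻¹ = j * j := inv_eq_of_mul_eq_one_left hj3
  obtain ⟨r₂, h2⟩ : ∃ r, r = j * r₁ * j⁻¹ := ⟨_, rfl⟩
  obtain ⟨r₃, h3⟩ : ∃ r, r = j * r₂ * j⁻¹ := ⟨_, rfl⟩
  have hr₂S : r₂ ∈ S := h2 ▸ S.mul_mem (S.mul_mem hjS hr₁S) (S.inv_mem hjS)
  have hr₃S : r₃ ∈ S := h3 ▸ S.mul_mem (S.mul_mem hjS hr₂S) (S.inv_mem hjS)
  have hR2 : (r₂ : Matrix (Fin 3) (Fin 3) ℂ) =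
      !![v, 0, 0; -u * (-1 - τ), u ^ 2, τ; 0, 0, v] := by
    rw [h2, hji]
    simp only [Units.val_mul, hj, hR1]
    ext a b
    fin_cases a <;> fin_cases b <;> simp [Matrix.mul_apply, Fin.sum_univ_three]
  have hR3 : (r₃ : Matrix (Fin 3) (Fin 3) ℂ) =
      !![v, 0, 0; 0, v, 0; τ, -u * (-1 - τ), u ^ 2] := by
    rw [h3, hji]
    simp only [Units.val_mul, hj, hR2]
    ext a b
    fin_cases a <;> fin_cases b <;> simp [Matrix.mul_apply, Fin.sum_univ_three]
  have hR2i : ((r₂⁻¹ : GL (Fin 3) ℂ) : Matrix (Fin 3) (Fin 3) ℂ) =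
      !![u, 0, 0; -1 - τ, v ^ 2, -v * τ; 0, 0, u] := by
    have : (!![u, 0, 0; -1 - τ, v ^ 2, -v * τ; 0, 0, u] : Matrix (Fin 3) (Fin 3) ℂ)
        * (r₂ : Matrix (Fin 3) (Fin 3) ℂ) = 1 := by
      rw [hR2]
      ext a b
      fin_cases a <;> fin_cases b <;> simp [Matrix.mul_apply, Fin.sum_univ_three] <;> grind
    have h' : ((r₂⁻¹ : GL (Fin 3) ℂ) : Matrix (Fin 3) (Fin 3) ℂ) = _ * _ := (one_mul _).symm
    rw [← this, mul_assoc, ← Units.val_mul, mul_inv_cancel, Units.val_one, mul_one] at h'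
    exact h'
  have hJi : ((j⁻¹ : GL (Fin 3) ℂ) : Matrix (Fin 3) (Fin 3) ℂ) =
      !![0, 1, 0; 0, 0, 1; 1, 0, 0] := by
    rw [hji, Units.val_mul, hj]
    ext a b
    fin_cases a <;> fin_cases b <;> simp [Matrix.mul_apply, Fin.sum_univ_three]
  -- the relation
  have hrel : (r₁ * j) ^ 7 = 1 := by
    have hP : ((r₁ * j : GL (Fin 3) ℂ) : Matrix (Fin 3) (Fin 3) ℂ) =
        !![τ, -u * (-1 - τ), u ^ 2; v, 0, 0; 0, v, 0] := by
      simp only [Units.val_mul, hj, hR1]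
      ext a b
      fin_cases a <;> fin_cases b <;> simp [Matrix.mul_apply, Fin.sum_univ_three]
    have hC : ((r₁ * j : GL (Fin 3) ℂ) : Matrix (Fin 3) (Fin 3) ℂ) ^ 3 =
        τ • ((r₁ * j : GL (Fin 3) ℂ) : Matrix (Fin 3) (Fin 3) ℂ) ^ 2 +
        (1 + τ) • ((r₁ * j : GL (Fin 3) ℂ) : Matrix (Fin 3) (Fin 3) ℂ) + 1 := by
      rw [hP]
      simp only [pow_succ, pow_zero, one_mul]
      ext a b
      fin_cases a <;> fin_cases b <;>
        simp [Matrix.mul_apply, Fin.sum_univ_three] <;> grind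
    apply Units.ext
    rw [Units.val_pow_eq_pow_val, Units.val_one]
    generalize ((r₁ * j : GL (Fin 3) ℂ) : Matrix (Fin 3) (Fin 3) ℂ) = X at *
    have h4 : X ^ 4 = (-1 : ℂ) • X ^ 2 + (-1 : ℂ) • X + τ • 1 := by
      have : X ^ 4 = X ^ 3 * X := by rw [pow_succ]
      rw [this, hC, add_mul, add_mul, smul_mul_assoc, smul_mul_assoc, ← pow_succ, hC, one_mul,
        ← pow_two]
      match_scalars <;> first | ring1 | linear_combination ht2
    have h7 : X ^ 7 = X ^ 4 * X ^ 3 := by rw [← pow_add]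
    have h8 : X ^ 7 = -(X ^ 3 * X ^ 2) - X ^ 4 + τ • X ^ 3 := by
      rw [h7, h4, add_mul, add_mul, smul_mul_assoc, smul_mul_assoc, smul_mul_assoc, one_mul,
        ← pow_add, ← pow_add, ← pow_succ', ← h4]
      simp only [neg_smul, one_smul]
      abel
    have h5 : X ^ 3 * X ^ 2 = -X ^ 3 - X ^ 2 + τ • X := by
      have : X ^ 3 * X ^ 2 = X ^ 4 * X := by rw [← pow_add, ← pow_succ]
      rw [this, h4, add_mul, add_mul, smul_mul_assoc, smul_mul_assoc, smul_mul_assoc, one_mul,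
        ← pow_succ, ← pow_two]
      match_scalars <;> ring
    rw [h8, h5, h4, hC]
    match_scalars <;> first | ring1 | linear_combination ht2
  apply le_antisymm
  · rw [Subgroup.closure_le]
    rintro g (hg | hg)
    · exact hg.1
    · exact hg.1
  set G := Subgroup.closure (mirrorStab S (LinearMap.ker (lfun (2 - u ^ 3 - v ^ 3)
    ((v ^ 2 - u) * τ) ((u ^ 2 - v) * (-1 - τ)))) ∪ mirrorStab S (LinearMap.ker (lfun 0 v (-τ))))
    with hG
  have g1 : ∀ g ∈ S, ∀ c : ℂ, c ≠ 0 →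
      ![2 - u ^ 3 - v ^ 3, (v ^ 2 - u) * τ, (u ^ 2 - v) * (-1 - τ)] ᵥ*
        (g : Matrix (Fin 3) (Fin 3) ℂ) =
        c • ![2 - u ^ 3 - v ^ 3, (v ^ 2 - u) * τ, (u ^ 2 - v) * (-1 - τ)] → g ∈ G := by
    intro g hg c hc h
    exact Subgroup.subset_closure (Or.inl (stab_of_vecMul S g hg _ _ _ c hc h))
  have g2 : ∀ g ∈ S, ∀ c : ℂ, c ≠ 0 →
      ![0, v, -τ] ᵥ* (g : Matrix (Fin 3) (Fin 3) ℂ) = c • ![0, v, -τ] → g ∈ G := by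
    intro g hg c hc h
    exact Subgroup.subset_closure (Or.inr (stab_of_vecMul S g hg _ _ _ c hc h))
  have k1 : r₁ ∈ G := by
    apply g2 _ hr₁S v hv
    rw [hR1]
    funext i
    fin_cases i <;> simp [Matrix.vecMul, dotProduct, Fin.sum_univ_three] <;> grind
  have hAS : r₂ * r₃ * r₂⁻¹ ∈ S := S.mul_mem (S.mul_mem hr₂S hr₃S) (S.inv_mem hr₂S)
  have kA : r₂ * r₃ * r₂⁻¹ ∈ G := by
    apply g2 _ hAS v hv
    simp only [Units.val_mul, ← Matrix.vecMul_vecMul]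
    rw [hR2, hR2i, hR3]
    funext i
    fin_cases i <;> simp [Matrix.vecMul, dotProduct, Fin.sum_univ_three] <;> grind
  have hn : ![2 - u ^ 3 - v ^ 3, (v ^ 2 - u) * τ, (u ^ 2 - v) * (-1 - τ)] =
      (v ^ 3 * (1 - u ^ 3)) • ![u ^ 3 - 1, u * τ, -u ^ 2 * (-1 - τ)] := by
    funext i
    fin_cases i <;> simp <;> grind
  have kC : r₂ * r₁ * r₂ ∈ G := by
    apply g1 _ (S.mul_mem (S.mul_mem hr₂S hr₁S) hr₂S) (-1) (by norm_num)
    rw [hn, Matrix.smul_vecMul, smul_comm (-1 : ℂ)]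
    congr 1
    simp only [Units.val_mul, ← Matrix.vecMul_vecMul]
    rw [hR2, hR1]
    funext i
    fin_cases i <;> simp [Matrix.vecMul, dotProduct, Fin.sum_univ_three] <;> grind
  have kB : r₂ * r₃ * r₂⁻¹ * r₁ * r₂ * j⁻¹ ∈ G := by
    apply g1 _ (S.mul_mem (S.mul_mem (S.mul_mem hAS hr₁S) hr₂S) (S.inv_mem hjS)) (-v)
      (neg_ne_zero.mpr hv)
    rw [hn, Matrix.smul_vecMul, smul_comm (-v)]
    congr 1
    simp only [Units.val_mul, ← Matrix.vecMul_vecMul]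
    rw [hR2, hR2i, hR3, hR1, hJi]
    funext i
    fin_cases i <;> simp [Matrix.vecMul, dotProduct, Fin.sum_univ_three] <;> grind
  have kj : j ∈ G := by
    have e : j = (r₂ * r₃ * r₂⁻¹)⁻¹ * (r₂ * r₃ * r₂⁻¹ * r₁ * r₂ * j⁻¹) * r₁ *
        (r₂ * r₃ * r₂⁻¹) * (r₂ * r₁ * r₂) := by
      have e1 : (r₂ * r₃ * r₂⁻¹)⁻¹ * (r₂ * r₃ * r₂⁻¹ * r₁ * r₂ * j⁻¹) * r₁ *
        (r₂ * r₃ * r₂⁻¹) * (r₂ * r₁ * r₂) =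
          r₁ * r₂ * j⁻¹ * r₁ * r₂ * r₃ * r₁ * r₂ := by group
      have e2 : r₁ * r₂ * j⁻¹ * r₁ * r₂ * r₃ * r₁ * r₂ =
          (r₁ * j) ^ 7 * (j * j * j)⁻¹ * (j * j * j)⁻¹ * (j * j * j)⁻¹ * j := by
        have q : j * j * j * r₁ = r₁ := by rw [hj3, one_mul]
        rw [h3, h2]
        simp only [hj3, inv_one, mul_one]
        rw [hji]
        simp only [pow_succ, pow_zero, one_mul, mul_assoc]
        have hj3' : ∀ x, j * (j * (j * x)) = x := by
          intro x
          rw [← mul_assoc, ← mul_assoc, hj3, one_mul]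
        have hj3'' : j * (j * j) = 1 := by rw [← mul_assoc, hj3]
        simp only [hj3', hj3'', mul_one]
      rw [e1, e2, hrel, hj3]
      simp
    rw [e]
    exact G.mul_mem (G.mul_mem (G.mul_mem (G.mul_mem (G.inv_mem kA) kB) k1) kA) kC
  rw [hS, Subgroup.closure_le]
  rintro g (rfl | rfl)
  · exact k1
  · exact kj
end

section
/- Let τ = (−1 − i·√7)/2 and let p = 8 or p = 12. Then the lattice S(p,τ) is generated by the union of two mirror stabilizers: the subgroup of GL(3,ℂ) generated by Stab(m₁) ∪ Stab(m₂) equals S(p,τ), where m₁ is the mirror of the complex reflection R₁ and m₂ = span_ℂ{e₁, R₃⁻¹·e₂} is the mirror of the complex reflection (R₁·R₃⁻¹R₂R₃)³. -/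
open Matrix

lemma stab_of_le {S : Subgroup (GL (Fin 3) ℂ)} {m : Submodule ℂ (Fin 3 → ℂ)}
    {g : GL (Fin 3) ℂ} (hg : g ∈ S)
    (h : ∀ x ∈ m, (g : Matrix (Fin 3) (Fin 3) ℂ).mulVec x ∈ m) : g ∈ mirrorStab S m := by
  refine ⟨hg, ?_⟩
  have hle : m.map (Matrix.mulVecLin (g : Matrix (Fin 3) (Fin 3) ℂ)) ≤ m := by
    rintro _ ⟨x, hx, rfl⟩
    exact h x hx
  refine Submodule.eq_of_le_of_finrank_eq hle ?_
  refine (Submodule.equivMapOfInjective _ ?_ m).finrank_eq.symm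
  have := Matrix.mulVec_injective_of_isUnit (A := (g : Matrix (Fin 3) (Fin 3) ℂ)) g.isUnit
  exact this

lemma stab_ker {S : Subgroup (GL (Fin 3) ℂ)} {a b c k : ℂ} {g : GL (Fin 3) ℂ} (hg : g ∈ S)
    {M : Matrix (Fin 3) (Fin 3) ℂ} (hM : (g : Matrix (Fin 3) (Fin 3) ℂ) = M)
    (h0 : a * M 0 0 + b * M 1 0 + c * M 2 0 = k * a)
    (h1 : a * M 0 1 + b * M 1 1 + c * M 2 1 = k * b)
    (h2 : a * M 0 2 + b * M 1 2 + c * M 2 2 = k * c) :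
    g ∈ mirrorStab S (LinearMap.ker (lfun a b c)) := by
  refine stab_of_le hg fun x hx => ?_
  rw [hM]
  simp only [lfun, LinearMap.mem_ker, LinearMap.add_apply, LinearMap.smul_apply,
    LinearMap.proj_apply, smul_eq_mul, Matrix.mulVec, dotProduct, Fin.sum_univ_three] at hx ⊢
  linear_combination k * hx + x 0 * h0 + x 1 * h1 + x 2 * h2

lemma stab_span {S : Subgroup (GL (Fin 3) ℂ)} {x y : Fin 3 → ℂ} {g : GL (Fin 3) ℂ} (hg : g ∈ S)
    {M : Matrix (Fin 3) (Fin 3) ℂ} (hM : (g : Matrix (Fin 3) (Fin 3) ℂ) = M)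
    {a b c d : ℂ} (h0 : M.mulVec x = a • x + b • y) (h1 : M.mulVec y = c • x + d • y) :
    g ∈ mirrorStab S (Submodule.span ℂ {x, y}) := by
  refine stab_of_le hg fun z hz => ?_
  obtain ⟨e, f, rfl⟩ := Submodule.mem_span_pair.1 hz
  rw [hM, Matrix.mulVec_add, Matrix.mulVec_smul, Matrix.mulVec_smul, h0, h1]
  refine Submodule.mem_span_pair.2 ⟨e * a + f * c, e * b + f * d, ?_⟩
  module

set_option maxHeartbeats 2000000 in
lemma key (p : ℕ) (s b u v : ℂ) (hu : uPar p = u) (hv : starRingEnd ℂ u = v)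
    (hb : starRingEnd ℂ s = b) (huv : u * v = 1) (hsb : s * b = 2) (hs : s + b = -1)
    (r₁ j : GL (Fin 3) ℂ)
    (hr₁ : (↑r₁ : Matrix (Fin 3) (Fin 3) ℂ) = R1S p s)
    (hj : (↑j : Matrix (Fin 3) (Fin 3) ℂ) = Jmat) :
    Subgroup.closure
        (mirrorStab (Subgroup.closure {r₁, j}) (mirror1 p s) ∪
          mirrorStab (Subgroup.closure {r₁, j})
            (Submodule.span ℂ
              {Pi.single 0 1, (R3S p s)⁻¹.mulVec (Pi.single 1 1)})) =
      Subgroup.closure {r₁, j} := by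
  have hvu : starRingEnd ℂ v = u := by rw [← hv]; simp
  have hbs : starRingEnd ℂ b = s := by rw [← hb]; simp
  obtain rfl : b = -1 - s := by linear_combination hs
  have hss : s ^ 2 = -s - 2 := by linear_combination -hsb
  set S := Subgroup.closure {r₁, j} with hS
  have hr₁S : r₁ ∈ S := Subgroup.subset_closure (by simp)
  have hjS : j ∈ S := Subgroup.subset_closure (by simp)
  have eR1 : R1S p s = !![u ^ 2, s, -u * (-1 - s); 0, v, 0; 0, 0, v] := by
    simp only [R1S, hu, hv, hb]
  have eR2 : R2S p s = !![v, 0, 0; -u * (-1 - s), u ^ 2, s; 0, 0, v] := by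
    simp only [R2S, hu, hv, hb]
  have eR3 : R3S p s = !![v, 0, 0; 0, v, 0; s, -u * (-1 - s), u ^ 2] := by
    simp only [R3S, hu, hv, hb]
  have eR3i : (R3S p s)⁻¹ = !![u, 0, 0; 0, u, 0; -v * s, -1 - s, v ^ 2] := by
    refine Matrix.inv_eq_right_inv ?_
    rw [eR3]
    ext a c
    fin_cases a <;> fin_cases c <;> simp [Matrix.mul_apply, Fin.sum_univ_three] <;> grind
  obtain ⟨r₂, hr₂⟩ : ∃ r, r = j * r₁ * j⁻¹ := ⟨_, rfl⟩
  obtain ⟨r₃, hr₃⟩ : ∃ r, r = j * r₂ * j⁻¹ := ⟨_, rfl⟩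
  have hr₂S : r₂ ∈ S := hr₂ ▸ S.mul_mem (S.mul_mem hjS hr₁S) (S.inv_mem hjS)
  have hr₃S : r₃ ∈ S := hr₃ ▸ S.mul_mem (S.mul_mem hjS hr₂S) (S.inv_mem hjS)
  have ji : ((j⁻¹ : GL (Fin 3) ℂ) : Matrix (Fin 3) (Fin 3) ℂ) = !![0, 1, 0; 0, 0, 1; 1, 0, 0] := by
    rw [Matrix.coe_units_inv, hj]
    refine Matrix.inv_eq_right_inv ?_
    ext a c
    fin_cases a <;> fin_cases c <;> simp [Jmat, Matrix.mul_apply, Fin.sum_univ_three]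
  have m2 : (r₂ : Matrix (Fin 3) (Fin 3) ℂ) = R2S p s := by
    rw [hr₂, Units.val_mul, Units.val_mul, ji, hj, hr₁, eR1, eR2]
    ext a c
    fin_cases a <;> fin_cases c <;> simp [Jmat, Matrix.mul_apply, Fin.sum_univ_three]
  have m3 : (r₃ : Matrix (Fin 3) (Fin 3) ℂ) = R3S p s := by
    rw [hr₃, Units.val_mul, Units.val_mul, ji, hj, m2, eR2, eR3]
    ext a c
    fin_cases a <;> fin_cases c <;> simp [Jmat, Matrix.mul_apply, Fin.sum_univ_three]
  obtain ⟨a, ha⟩ : ∃ r, r = r₃⁻¹ * r₂ * r₃ := ⟨_, rfl⟩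
  obtain ⟨h₁, hh₁⟩ : ∃ r, r = r₂ * r₁ * r₂ := ⟨_, rfl⟩
  obtain ⟨h₂, hh₂⟩ : ∃ r, r = r₃ * r₁ * r₃ := ⟨_, rfl⟩
  have haS : a ∈ S := ha ▸ S.mul_mem (S.mul_mem (S.inv_mem hr₃S) hr₂S) hr₃S
  have hh₁S : h₁ ∈ S := hh₁ ▸ S.mul_mem (S.mul_mem hr₂S hr₁S) hr₂S
  have hh₂S : h₂ ∈ S := hh₂ ▸ S.mul_mem (S.mul_mem hr₃S hr₁S) hr₃S
  have ma : (a : Matrix (Fin 3) (Fin 3) ℂ) = !![v, 0, 0; -u, -u ^ 2, u ^ 3 * s;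
      -(-1 - s), -u * (-1 - s) - v ^ 2 * (-1 - s), 2 * u ^ 2 + v] := by
    rw [ha, Units.val_mul, Units.val_mul, Matrix.coe_units_inv, m3, m2, eR3i, eR2, eR3]
    ext a c
    fin_cases a <;> fin_cases c <;> simp [Matrix.mul_apply, Fin.sum_univ_three] <;> grind
  have mh1 : (h₁ : Matrix (Fin 3) (Fin 3) ℂ) =
      !![-1, u * s, -v; 0, -u ^ 3, v ^ 2 * s - u; 0, 0, v ^ 3] := by
    rw [hh₁, Units.val_mul, Units.val_mul, hr₁, m2, eR1, eR2]
    ext a c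
    fin_cases a <;> fin_cases c <;> simp [Matrix.mul_apply, Fin.sum_univ_three] <;> grind
  have mh2 : (h₂ : Matrix (Fin 3) (Fin 3) ℂ) =
      !![-1, s * v ^ 2 + u * (s - 1), -u ^ 2 * (-1 - s); 0, v ^ 3, 0;
        0, u ^ 2 * (-1 - s) - v, -u ^ 3] := by
    rw [hh₂, Units.val_mul, Units.val_mul, hr₁, m3, eR1, eR3]
    ext a c
    fin_cases a <;> fin_cases c <;> simp [Matrix.mul_apply, Fin.sum_univ_three] <;> grind
  have hm1 : mirror1 p s = LinearMap.ker
      (lfun (2 - u ^ 3 - v ^ 3) ((v ^ 2 - u) * s) ((u ^ 2 - v) * (-1 - s))) := by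
    simp only [mirror1, alphaPar, betaPar, hu, hv, hb, map_mul, map_sub, map_pow, hvu]
  rw [eR3i, hm1]
  have hw : (!![u, 0, 0; 0, u, 0; -v * s, -1 - s, v ^ 2] : Matrix (Fin 3) (Fin 3) ℂ).mulVec
      (Pi.single 1 1) = ![0, u, -1 - s] := by
    ext i
    fin_cases i <;> simp
  have he : (Pi.single 0 1 : Fin 3 → ℂ) = ![1, 0, 0] := by
    ext i
    fin_cases i <;> simp
  rw [hw, he]
  set T := Subgroup.closure (mirrorStab S (LinearMap.ker
      (lfun (2 - u ^ 3 - v ^ 3) ((v ^ 2 - u) * s) ((u ^ 2 - v) * (-1 - s)))) ∪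
      mirrorStab S (Submodule.span ℂ {![1, 0, 0], ![0, u, -1 - s]})) with hT
  have r₁T : r₁ ∈ T := by
    refine Subgroup.subset_closure (Or.inl
      (stab_ker (k := u ^ 2) hr₁S (hr₁.trans eR1) ?_ ?_ ?_)) <;> simp <;> grind
  have h₁T : h₁ ∈ T := by
    refine Subgroup.subset_closure (Or.inl
      (stab_ker (k := -1) hh₁S mh1 ?_ ?_ ?_)) <;> simp <;> grind
  have h₂T : h₂ ∈ T := by
    refine Subgroup.subset_closure (Or.inl
      (stab_ker (k := -1) hh₂S mh2 ?_ ?_ ?_)) <;> simp <;> grind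
  have aT : a ∈ T := by
    refine Subgroup.subset_closure (Or.inr
      (stab_span (a := v) (b := -1) (c := 0) (d := u ^ 2) haS ma ?_ ?_)) <;> ext i <;>
      fin_cases i <;> simp [Matrix.mulVec, dotProduct, Fin.sum_univ_three] <;> grind
  have rel : r₁ * j * (a * h₁) * (h₂ * (a * r₁)) = h₂ := by
    have eX : ((r₁ * j : GL (Fin 3) ℂ) : Matrix (Fin 3) (Fin 3) ℂ) =
        !![s, -u * (-1 - s), u ^ 2; v, 0, 0; 0, v, 0] := by
      rw [Units.val_mul, hr₁, hj, eR1, Jmat]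
      ext a c
      fin_cases a <;> fin_cases c <;> simp [Matrix.mul_apply, Fin.sum_univ_three]
    have eY : ((a * h₁ : GL (Fin 3) ℂ) : Matrix (Fin 3) (Fin 3) ℂ) =
        !![-v, s, -v ^ 2; u, -u ^ 2 * s + u ^ 5, 1 + u ^ 3;
          -1 - s, -2 * u + u ^ 4 * (-1 - s) + u * (-1 - s),
          2 * v * (-1 - s) - v ^ 4 + u ^ 2 * (-1 - s)] := by
      rw [Units.val_mul, ma, mh1]
      ext a c
      fin_cases a <;> fin_cases c <;> simp [Matrix.mul_apply, Fin.sum_univ_three] <;> grind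
    have eZ : ((a * r₁ : GL (Fin 3) ℂ) : Matrix (Fin 3) (Fin 3) ℂ) =
        !![u, s * v, 1 + s; -u ^ 3, u * (-1 - s), -u ^ 2;
          -u ^ 2 * (-1 - s), s - 1 - v ^ 3 * (-1 - s), -u * (-1 - s) + v ^ 2] := by
      rw [Units.val_mul, ma, hr₁, eR1]
      ext a c
      fin_cases a <;> fin_cases c <;> simp [Matrix.mul_apply, Fin.sum_univ_three] <;> grind
    have eV : ((r₁ * j * (a * h₁) : GL (Fin 3) ℂ) : Matrix (Fin 3) (Fin 3) ℂ) =
        !![-s * v, -s - 2 + u ^ 3 * (-1 - s), (v ^ 2 + u) * (-1 - s);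
          -v ^ 2, v * s, -v ^ 3; 1, -u * s + u ^ 4, v + u ^ 2] := by
      rw [Units.val_mul, eX, eY]
      ext a c
      fin_cases a <;> fin_cases c <;> simp [Matrix.mul_apply, Fin.sum_univ_three] <;> grind
    have eW : ((h₂ * (a * r₁) : GL (Fin 3) ℂ) : Matrix (Fin 3) (Fin 3) ℂ) =
        !![u * (-1 - s), v, -s; -1, v ^ 2 * (-1 - s), -v; u ^ 2, 0, 0] := by
      rw [Units.val_mul, mh2, eZ]
      ext a c
      fin_cases a <;> fin_cases c <;> simp [Matrix.mul_apply, Fin.sum_univ_three] <;> grind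
    apply Units.ext
    rw [Units.val_mul, eV, eW, mh2]
    ext a c
    fin_cases a <;> fin_cases c <;> simp [Matrix.mul_apply, Fin.sum_univ_three] <;> grind
  have hjT : j ∈ T := by
    have : j = r₁⁻¹ * h₂ * (h₂ * (a * r₁))⁻¹ * (a * h₁)⁻¹ := by
      rw [eq_mul_inv_iff_mul_eq, eq_mul_inv_iff_mul_eq, eq_inv_mul_iff_mul_eq]
      simpa only [mul_assoc] using rel
    rw [this]
    exact T.mul_mem (T.mul_mem (T.mul_mem (T.inv_mem r₁T) h₂T)
      (T.inv_mem (T.mul_mem h₂T (T.mul_mem aT r₁T)))) (T.inv_mem (T.mul_mem aT h₁T))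
  apply le_antisymm
  · rw [hT, Subgroup.closure_le]
    rintro g (hg | hg) <;> exact hg.1
  · rw [hS, Subgroup.closure_le]
    rintro g (rfl | rfl)
    · exact r₁T
    · exact hjT

/-- For `τ = (−1−i√7)/2` and `p = 8` or `12`, the lattice `S(p,τ)` is generated by
the union of the stabilizers of the mirror of `R₁` and of the mirror
`span{e₁, R₃⁻¹·e₂}` of the complex reflection `(R₁·R₃⁻¹R₂R₃)³`. -/
theorem stmt13 (p : ℕ) (hp : p = 8 ∨ p = 12)
    (τ : ℂ) (hτ : τ = (-1 - Complex.I * Real.sqrt 7) / 2)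
    (r₁ j : GL (Fin 3) ℂ)
    (hr₁ : (↑r₁ : Matrix (Fin 3) (Fin 3) ℂ) = R1S p τ)
    (hj : (↑j : Matrix (Fin 3) (Fin 3) ℂ) = Jmat) :
    Subgroup.closure
        (mirrorStab (Subgroup.closure {r₁, j}) (mirror1 p τ) ∪
          mirrorStab (Subgroup.closure {r₁, j})
            (Submodule.span ℂ
              {Pi.single 0 1, (R3S p τ)⁻¹.mulVec (Pi.single 1 1)})) =
      Subgroup.closure {r₁, j} := by
  have hsc : starRingEnd ℂ τ = (-1 + Complex.I * Real.sqrt 7) / 2 := by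
    rw [hτ]; simp [map_ofNat]
  have h7 : ((Real.sqrt 7 : ℝ) : ℂ) ^ 2 = 7 := by
    rw [← Complex.ofReal_pow, Real.sq_sqrt (by norm_num)]; norm_num
  refine key p τ _ _ _ rfl rfl rfl ?_ ?_ ?_ r₁ j hr₁ hj
  · have h : uPar p = Complex.exp ((2 * Real.pi / (3 * p) : ℝ) * Complex.I) := by
      unfold uPar; congr 1; push_cast; ring
    rw [Complex.mul_conj, Complex.normSq_eq_norm_sq, h, Complex.norm_exp_ofReal_mul_I]
    simp
  · rw [hsc, hτ]
    linear_combination (1 / 4 : ℂ) * h7 - (1 / 4 : ℂ) * ((Real.sqrt 7 : ℝ) : ℂ) ^ 2 * Complex.I_sq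
  · rw [hsc, hτ]; ring
end

section
/- Let τ = (−1 − i·√7)/2 and let p = 8 or p = 12. Then the lattice S(p,τ) is generated by the union of two mirror stabilizers: the subgroup of GL(3,ℂ) generated by Stab(m₁) ∪ Stab(m₂) equals S(p,τ), where m₁ is the mirror of the complex reflection R₁ and m₂ = span_ℂ{e₁, R₃R₁·e₂} is the mirror of the complex reflection (R₁·R₃R₁R₂R₁⁻¹R₃⁻¹)³. -/
open Matrix

/-- A subspace mapped into itself by an invertible matrix is mapped onto itself. -/
theorem map_eq_of_map_le (g : GL (Fin 3) ℂ) (m : Submodule ℂ (Fin 3 → ℂ))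
    (h : m.map (Matrix.mulVecLin (g : Matrix (Fin 3) (Fin 3) ℂ)) ≤ m) :
    m.map (Matrix.mulVecLin (g : Matrix (Fin 3) (Fin 3) ℂ)) = m := by
  have hinj : Function.Injective (Matrix.mulVecLin (g : Matrix (Fin 3) (Fin 3) ℂ)) := by
    intro x y hxy
    simp only [Matrix.mulVecLin_apply] at hxy
    have := congrArg (fun z => (↑g⁻¹ : Matrix (Fin 3) (Fin 3) ℂ) *ᵥ z) hxy
    simpa [Matrix.mulVec_mulVec, ← Units.val_mul] using this
  apply Submodule.eq_of_le_of_finrank_eq h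
  exact (Submodule.equivMapOfInjective _ hinj m).finrank_eq.symm

/-- If the row `(a,b,c)` is an eigenvector of `g`, the kernel of the functional is stable. -/
theorem map_ker_lfun (g : GL (Fin 3) ℂ) (a b c k : ℂ)
    (M : Matrix (Fin 3) (Fin 3) ℂ) (hM : (g : Matrix (Fin 3) (Fin 3) ℂ) = M)
    (h0 : a * M 0 0 + b * M 1 0 + c * M 2 0 = k * a)
    (h1 : a * M 0 1 + b * M 1 1 + c * M 2 1 = k * b)
    (h2 : a * M 0 2 + b * M 1 2 + c * M 2 2 = k * c) :
    (LinearMap.ker (lfun a b c)).map (Matrix.mulVecLin (g : Matrix (Fin 3) (Fin 3) ℂ)) =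
      LinearMap.ker (lfun a b c) := by
  apply map_eq_of_map_le
  rw [Submodule.map_le_iff_le_comap]
  intro x hx
  simp only [LinearMap.mem_ker, lfun, LinearMap.add_apply, LinearMap.smul_apply,
    LinearMap.proj_apply, smul_eq_mul, Submodule.mem_comap, Matrix.mulVecLin_apply, hM,
    Matrix.mulVec, dotProduct, Fin.sum_univ_three] at hx ⊢
  linear_combination k * hx + x 0 * h0 + x 1 * h1 + x 2 * h2

/-- If `g` maps both spanning vectors into the span, it stabilizes the span. -/
theorem map_span_pair (g : GL (Fin 3) ℂ) (x y : Fin 3 → ℂ) (a b c d : ℂ)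
    (hx : (g : Matrix (Fin 3) (Fin 3) ℂ) *ᵥ x = a • x + b • y)
    (hy : (g : Matrix (Fin 3) (Fin 3) ℂ) *ᵥ y = c • x + d • y) :
    (Submodule.span ℂ {x, y}).map (Matrix.mulVecLin (g : Matrix (Fin 3) (Fin 3) ℂ)) =
      Submodule.span ℂ {x, y} := by
  apply map_eq_of_map_le
  rw [Submodule.map_span_le]
  intro z hz
  rw [Matrix.mulVecLin_apply, Submodule.mem_span_pair]
  rcases hz with rfl | hz
  · exact ⟨a, b, hx.symm⟩
  · rw [Set.mem_singleton_iff] at hz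
    subst hz
    exact ⟨c, d, hy.symm⟩

/-- The product `R₂R₁`. -/
theorem m_R21 (u v t : ℂ) (h : u * v = 1) (ht : t ^ 2 + t + 2 = 0) :
    !![v, 0, 0; u*t + u, u^2, t; 0, 0, v] *
    !![u^2, t, u*t + u; 0, v, 0; 0, 0, v] =
      !![u, v*t, t + 1; u^3*t + u^3, - u, u^2*t - u^2 + v*t; 0, 0, v^2] := by
  ext i k
  fin_cases i <;> fin_cases k <;>
    simp [Matrix.mul_apply, Fin.sum_univ_three] <;> grind

/-- The product `R₂R₁R₂`. -/
theorem m_q (u v t : ℂ) (h : u * v = 1) (ht : t ^ 2 + t + 2 = 0) :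
    !![u, v*t, t + 1; u^3*t + u^3, - u, u^2*t - u^2 + v*t; 0, 0, v^2] *
    !![v, 0, 0; u*t + u, u^2, t; 0, 0, v] =
      !![- 1, u*t, - v; 0, - u^3, - u + v^2*t; 0, 0, v^3] := by
  ext i k
  fin_cases i <;> fin_cases k <;>
    simp [Matrix.mul_apply, Fin.sum_univ_three] <;> grind

/-- The product `R₃R₁`. -/
theorem m_R31 (u v t : ℂ) (h : u * v = 1) (ht : t ^ 2 + t + 2 = 0) :
    !![v, 0, 0; 0, v, 0; t, u*t + u, u^2] *
    !![u^2, t, u*t + u; 0, v, 0; 0, 0, v] =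
      !![u, v*t, t + 1; 0, v^2, 0; u^2*t, - 1, - u] := by
  ext i k
  fin_cases i <;> fin_cases k <;>
    simp [Matrix.mul_apply, Fin.sum_univ_three] <;> grind

/-- The product `R₃R₁R₃`. -/
theorem m_r (u v t : ℂ) (h : u * v = 1) (ht : t ^ 2 + t + 2 = 0) :
    !![u, v*t, t + 1; 0, v^2, 0; u^2*t, - 1, - u] *
    !![v, 0, 0; 0, v, 0; t, u*t + u, u^2] =
      !![- 1, u*t - u + v^2*t, u^2*t + u^2; 0, v^3, 0; 0, - u^2*t - u^2 - v, - u^3] := by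
  ext i k
  fin_cases i <;> fin_cases k <;>
    simp [Matrix.mul_apply, Fin.sum_univ_three] <;> grind

/-- The product `R₃R₁R₂`. -/
theorem m_R312 (u v t : ℂ) (h : u * v = 1) (ht : t ^ 2 + t + 2 = 0) :
    !![u, v*t, t + 1; 0, v^2, 0; u^2*t, - 1, - u] *
    !![v, 0, 0; u*t + u, u^2, t; 0, 0, v] =
      !![- 1, u*t, - v; v*t + v, 1, v^2*t; - u, - u^2, - t - 1] := by
  ext i k
  fin_cases i <;> fin_cases k <;>
    simp [Matrix.mul_apply, Fin.sum_univ_three] <;> grind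

/-- The defining identity of `A = R₃R₁R₂R₁⁻¹R₃⁻¹`. -/
theorem m_A (u v t : ℂ) (h : u * v = 1) (ht : t ^ 2 + t + 2 = 0) :
    !![v*t + v, u^3*t + t + 2, v^2*t; v^2, u^2 - v*t + v, v^3; - 1, - u^4 + u*t, 0] *
    !![u, v*t, t + 1; 0, v^2, 0; u^2*t, - 1, - u] =
      !![- 1, u*t, - v; v*t + v, 1, v^2*t; - u, - u^2, - t - 1] := by
  ext i k
  fin_cases i <;> fin_cases k <;>
    simp [Matrix.mul_apply, Fin.sum_univ_three] <;> grind

/-- The product `rq`. -/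
theorem m_rq (u v t : ℂ) (h : u * v = 1) (ht : t ^ 2 + t + 2 = 0) :
    !![- 1, u*t - u + v^2*t, u^2*t + u^2; 0, v^3, 0; 0, - u^2*t - u^2 - v, - u^3] *
    !![- 1, u*t, - v; 0, - u^3, - u + v^2*t; 0, 0, v^3] =
      !![1, - u^4*t + u^4 - 2*u*t, - u^2*t + u^2 - 2*v*t - v^4*t - 2*v^4; 0, - 1, - v^2 + v^5*t; 0, u^5*t + u^5 + u^2, u^3*t + u^3 + 2 - v^3*t] := by
  ext i k
  fin_cases i <;> fin_cases k <;>
    simp [Matrix.mul_apply, Fin.sum_univ_three] <;> grind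

/-- The product `Arq`. -/
theorem m_X (u v t : ℂ) (h : u * v = 1) (ht : t ^ 2 + t + 2 = 0) :
    !![v*t + v, u^3*t + t + 2, v^2*t; v^2, u^2 - v*t + v, v^3; - 1, - u^4 + u*t, 0] *
    !![1, - u^4*t + u^4 - 2*u*t, - u^2*t + u^2 - 2*v*t - v^4*t - 2*v^4; 0, - 1, - v^2 + v^5*t; 0, u^5*t + u^5 + u^2, u^3*t + u^3 + 2 - v^3*t] =
      !![v*t + v, u^3 + 2, u; v^2, u^2 - v*t, 1 + v^3; - 1, u^4*t + u*t, u^2*t] := by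
  ext i k
  fin_cases i <;> fin_cases k <;>
    simp [Matrix.mul_apply, Fin.sum_univ_three] <;> grind

/-- The relation giving `R₂`. -/
theorem m_XA (u v t : ℂ) (h : u * v = 1) (ht : t ^ 2 + t + 2 = 0) :
    !![v*t + v, u^3 + 2, u; v^2, u^2 - v*t, 1 + v^3; - 1, u^4*t + u*t, u^2*t] *
    !![v*t + v, u^3*t + t + 2, v^2*t; v^2, u^2 - v*t + v, v^3; - 1, - u^4 + u*t, 0] =
      !![v, 0, 0; u*t + u, u^2, t; 0, 0, v] *
    !![v*t + v, u^3 + 2, u; v^2, u^2 - v*t, 1 + v^3; - 1, u^4*t + u*t, u^2*t] := by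
  ext i k
  fin_cases i <;> fin_cases k <;>
    simp [Matrix.mul_apply, Fin.sum_univ_three] <;> grind

/-- The product `R₁R₂`. -/
theorem m_R12 (u v t : ℂ) (h : u * v = 1) (ht : t ^ 2 + t + 2 = 0) :
    !![u^2, t, u*t + u; 0, v, 0; 0, 0, v] *
    !![v, 0, 0; u*t + u, u^2, t; 0, 0, v] =
      !![- u, u^2*t, - 1; t + 1, u, v*t; 0, 0, v^2] := by
  ext i k
  fin_cases i <;> fin_cases k <;>
    simp [Matrix.mul_apply, Fin.sum_univ_three] <;> grind

/-- The conjugate `R₁R₂R₁⁻¹`. -/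
theorem m_C (u v t : ℂ) (h : u * v = 1) (ht : t ^ 2 + t + 2 = 0) :
    !![- v, u^3*t + t, u*t; v^2*t + v^2, u^2 + 2*v, 1; 0, 0, v] *
    !![u^2, t, u*t + u; 0, v, 0; 0, 0, v] =
      !![- u, u^2*t, - 1; t + 1, u, v*t; 0, 0, v^2] := by
  ext i k
  fin_cases i <;> fin_cases k <;>
    simp [Matrix.mul_apply, Fin.sum_univ_three] <;> grind

/-- The relation giving `R₃`. -/
theorem m_AR3 (u v t : ℂ) (h : u * v = 1) (ht : t ^ 2 + t + 2 = 0) :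
    !![v*t + v, u^3*t + t + 2, v^2*t; v^2, u^2 - v*t + v, v^3; - 1, - u^4 + u*t, 0] *
    !![v, 0, 0; 0, v, 0; t, u*t + u, u^2] =
      !![- v, u^3*t + t, u*t; v^2*t + v^2, u^2 + 2*v, 1; 0, 0, v] *
    !![v*t + v, u^3*t + t + 2, v^2*t; v^2, u^2 - v*t + v, v^3; - 1, - u^4 + u*t, 0] := by
  ext i k
  fin_cases i <;> fin_cases k <;>
    simp [Matrix.mul_apply, Fin.sum_univ_three] <;> grind

/-- The product `R₁R₂R₃`. -/
theorem m_P (u v t : ℂ) (h : u * v = 1) (ht : t ^ 2 + t + 2 = 0) :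
    !![- u, u^2*t, - 1; t + 1, u, v*t; 0, 0, v^2] *
    !![v, 0, 0; 0, v, 0; t, u*t + u, u^2] =
      !![- t - 1, - u, - u^2; - v, - 1, u*t; v^2*t, v*t + v, 1] := by
  ext i k
  fin_cases i <;> fin_cases k <;>
    simp [Matrix.mul_apply, Fin.sum_univ_three] <;> grind

/-- The square of `R₁R₂R₃`. -/
theorem m_PP (u v t : ℂ) (h : u * v = 1) (ht : t ^ 2 + t + 2 = 0) :
    !![- t - 1, - u, - u^2; - v, - 1, u*t; v^2*t, v*t + v, 1] *
    !![- t - 1, - u, - u^2; - v, - 1, u*t; v^2*t, v*t + v, 1] =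
      !![0, u, 0; 0, 0, u; v^2, - v*t, - t - 1] := by
  ext i k
  fin_cases i <;> fin_cases k <;>
    simp [Matrix.mul_apply, Fin.sum_univ_three] <;> grind

/-- The product `(R₁R₂R₃)²R₁`. -/
theorem m_PPR (u v t : ℂ) (h : u * v = 1) (ht : t ^ 2 + t + 2 = 0) :
    !![0, u, 0; 0, 0, u; v^2, - v*t, - t - 1] *
    !![u^2, t, u*t + u; 0, v, 0; 0, 0, v] =
      !![0, 1, 0; 0, 0, 1; 1, 0, 0] := by
  ext i k
  fin_cases i <;> fin_cases k <;>
    simp [Matrix.mul_apply, Fin.sum_univ_three] <;> grind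

/-- For `τ = (−1−i√7)/2` and `p = 8` or `12`, the lattice `S(p,τ)` is generated by
the union of the stabilizers of the mirror of `R₁` and of the mirror
`span{e₁, R₃R₁·e₂}` of the complex reflection `(R₁·R₃R₁R₂R₁⁻¹R₃⁻¹)³`. -/
theorem stmt14 (p : ℕ) (hp : p = 8 ∨ p = 12)
    (τ : ℂ) (hτ : τ = (-1 - Complex.I * Real.sqrt 7) / 2)
    (r₁ j : GL (Fin 3) ℂ)
    (hr₁ : (↑r₁ : Matrix (Fin 3) (Fin 3) ℂ) = R1S p τ)
    (hj : (↑j : Matrix (Fin 3) (Fin 3) ℂ) = Jmat) :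
    Subgroup.closure
        (mirrorStab (Subgroup.closure {r₁, j}) (mirror1 p τ) ∪
          mirrorStab (Subgroup.closure {r₁, j})
            (Submodule.span ℂ
              {Pi.single 0 1, (R3S p τ * R1S p τ).mulVec (Pi.single 1 1)})) =
      Subgroup.closure {r₁, j} := by
  apply le_antisymm
  · rw [Subgroup.closure_le]
    rintro g (hg | hg)
    · exact hg.1
    · exact hg.1
  obtain ⟨u, hu⟩ : ∃ u, u = uPar p := ⟨_, rfl⟩
  obtain ⟨v, hv⟩ : ∃ v, v = starRingEnd ℂ (uPar p) := ⟨_, rfl⟩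
  obtain ⟨t, htt⟩ : ∃ t, t = τ := ⟨_, rfl⟩
  have h : u * v = 1 := by
    rw [hu, hv, uPar, ← Complex.exp_conj, ← Complex.exp_add]
    simp only [map_div₀, map_mul, Complex.conj_I, Complex.conj_ofReal, map_ofNat, map_natCast]
    rw [← Complex.exp_zero]
    congr 1
    ring
  have h7 : ((Real.sqrt 7 : ℝ) : ℂ) ^ 2 = 7 := by
    rw [← Complex.ofReal_pow, Real.sq_sqrt (by norm_num)]
    norm_num
  have ht : t ^ 2 + t + 2 = 0 := by
    rw [htt, hτ]
    linear_combination (1 / 4 : ℂ) * Real.sqrt 7 ^ 2 * Complex.I_sq - (1 / 4 : ℂ) * h7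
  have hs : starRingEnd ℂ τ = -1 - t := by
    rw [htt, hτ]
    simp only [map_div₀, map_sub, map_neg, map_one, map_mul, Complex.conj_I, Complex.conj_ofReal,
      map_ofNat]
    ring
  have e1 : (r₁ : Matrix (Fin 3) (Fin 3) ℂ) = (!![u^2, t, u*t + u; 0, v, 0; 0, 0, v] : Matrix (Fin 3) (Fin 3) ℂ) := by
    rw [hr₁, R1S, hs, ← hv, ← hu, ← htt]
    ext i k
    fin_cases i <;> fin_cases k <;> simp <;> ring
  have ej : (j : Matrix (Fin 3) (Fin 3) ℂ) = (!![0, 0, 1; 1, 0, 0; 0, 1, 0] : Matrix (Fin 3) (Fin 3) ℂ) := hj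
  obtain ⟨r₂, h2⟩ : ∃ r, r = j * r₁ * j⁻¹ := ⟨_, rfl⟩
  obtain ⟨r₃, h3⟩ : ∃ r, r = j * r₂ * j⁻¹ := ⟨_, rfl⟩
  have hconj : ∀ (x y z : GL (Fin 3) ℂ) (N : Matrix (Fin 3) (Fin 3) ℂ),
      z = x * y * x⁻¹ → N * (x : Matrix (Fin 3) (Fin 3) ℂ) = x * y →
      (z : Matrix (Fin 3) (Fin 3) ℂ) = N := by
    intro x y z N hz hN
    rw [hz, Units.val_mul, Units.val_mul, ← hN, Matrix.mul_assoc, ← Units.val_mul]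
    simp
  have e2 : (r₂ : Matrix (Fin 3) (Fin 3) ℂ) = (!![v, 0, 0; u*t + u, u^2, t; 0, 0, v] : Matrix (Fin 3) (Fin 3) ℂ) := by
    apply hconj j r₁ _ _ h2
    rw [e1, ej]
    ext i k
    fin_cases i <;> fin_cases k <;> simp [Matrix.mul_apply, Fin.sum_univ_three]
  have e3 : (r₃ : Matrix (Fin 3) (Fin 3) ℂ) = (!![v, 0, 0; 0, v, 0; t, u*t + u, u^2] : Matrix (Fin 3) (Fin 3) ℂ) := by
    apply hconj j r₂ _ _ h3
    rw [e2, ej]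
    ext i k
    fin_cases i <;> fin_cases k <;> simp [Matrix.mul_apply, Fin.sum_univ_three]
  have e3S : R3S p τ = r₃ := by
    rw [e3, R3S, hs, ← hv, ← hu, ← htt]
    ext i k
    fin_cases i <;> fin_cases k <;> simp <;> ring
  obtain ⟨a, ha⟩ : ∃ a, a = (r₃ * r₁) * r₂ * (r₃ * r₁)⁻¹ := ⟨_, rfl⟩
  obtain ⟨c, hc⟩ : ∃ c, c = r₁ * r₂ * r₁⁻¹ := ⟨_, rfl⟩
  obtain ⟨q, hq⟩ : ∃ q, q = r₂ * r₁ * r₂ := ⟨_, rfl⟩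
  obtain ⟨r, hr⟩ : ∃ r, r = r₃ * r₁ * r₃ := ⟨_, rfl⟩
  have e31 : ((r₃ * r₁ : GL (Fin 3) ℂ) : Matrix (Fin 3) (Fin 3) ℂ) = (!![u, v*t, t + 1; 0, v^2, 0; u^2*t, - 1, - u] : Matrix (Fin 3) (Fin 3) ℂ) := by
    rw [Units.val_mul, e3, e1]
    exact m_R31 u v t h ht
  have ea : (a : Matrix (Fin 3) (Fin 3) ℂ) = (!![v*t + v, u^3*t + t + 2, v^2*t; v^2, u^2 - v*t + v, v^3; - 1, - u^4 + u*t, 0] : Matrix (Fin 3) (Fin 3) ℂ) := by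
    apply hconj _ _ _ _ ha
    rw [e31, e2]
    exact (m_A u v t h ht).trans (m_R312 u v t h ht).symm
  have ec : (c : Matrix (Fin 3) (Fin 3) ℂ) = (!![- v, u^3*t + t, u*t; v^2*t + v^2, u^2 + 2*v, 1; 0, 0, v] : Matrix (Fin 3) (Fin 3) ℂ) := by
    apply hconj _ _ _ _ hc
    rw [e1, e2]
    exact (m_C u v t h ht).trans (m_R12 u v t h ht).symm
  have eq : (q : Matrix (Fin 3) (Fin 3) ℂ) = (!![- 1, u*t, - v; 0, - u^3, - u + v^2*t; 0, 0, v^3] : Matrix (Fin 3) (Fin 3) ℂ) := by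
    rw [hq, Units.val_mul, Units.val_mul, e2, e1, m_R21 u v t h ht, m_q u v t h ht]
  have er : (r : Matrix (Fin 3) (Fin 3) ℂ) = (!![- 1, u*t - u + v^2*t, u^2*t + u^2; 0, v^3, 0; 0, - u^2*t - u^2 - v, - u^3] : Matrix (Fin 3) (Fin 3) ℂ) := by
    rw [hr, Units.val_mul, e31, e3, m_r u v t h ht]
  have eX : ((a * (r * q) : GL (Fin 3) ℂ) : Matrix (Fin 3) (Fin 3) ℂ) = (!![v*t + v, u^3 + 2, u; v^2, u^2 - v*t, 1 + v^3; - 1, u^4*t + u*t, u^2*t] : Matrix (Fin 3) (Fin 3) ℂ) := by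
    rw [Units.val_mul, Units.val_mul, ea, er, eq, m_rq u v t h ht, m_X u v t h ht]
  have rel2 : a * (r * q) * a = r₂ * (a * (r * q)) := by
    apply Units.ext
    rw [Units.val_mul, Units.val_mul r₂, eX, ea, e2, m_XA u v t h ht]
  have rel3 : a * r₃ = c * a := by
    apply Units.ext
    rw [Units.val_mul, Units.val_mul, ea, e3, ec, m_AR3 u v t h ht]
  have relj : r₁ * r₂ * r₃ * (r₁ * r₂ * r₃) * r₁ * j = 1 := by
    apply Units.ext
    simp only [Units.val_mul, Units.val_one]
    rw [e1, e2, e3, ej, m_R12 u v t h ht, m_P u v t h ht, m_PP u v t h ht, m_PPR u v t h ht,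
      Matrix.one_fin_three]
    ext i k
    fin_cases i <;> fin_cases k <;> simp [Matrix.mul_apply, Fin.sum_univ_three]
  -- membership in the lattice
  have s1 : r₁ ∈ Subgroup.closure {r₁, j} := Subgroup.subset_closure (by simp)
  have sj : j ∈ Subgroup.closure {r₁, j} := Subgroup.subset_closure (by simp)
  have s2 : r₂ ∈ Subgroup.closure {r₁, j} := by
    rw [h2]
    exact mul_mem (mul_mem sj s1) (inv_mem sj)
  have s3 : r₃ ∈ Subgroup.closure {r₁, j} := by
    rw [h3]
    exact mul_mem (mul_mem sj s2) (inv_mem sj)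
  have sa : a ∈ Subgroup.closure {r₁, j} := by
    rw [ha]
    exact mul_mem (mul_mem (mul_mem s3 s1) s2) (inv_mem (mul_mem s3 s1))
  have sq : q ∈ Subgroup.closure {r₁, j} := by
    rw [hq]
    exact mul_mem (mul_mem s2 s1) s2
  have sr : r ∈ Subgroup.closure {r₁, j} := by
    rw [hr]
    exact mul_mem (mul_mem s3 s1) s3
  -- the mirrors
  have hm1 : mirror1 p τ =
      LinearMap.ker (lfun (2 - u ^ 3 - v ^ 3) ((v ^ 2 - u) * t) ((u ^ 2 - v) * (-1 - t))) := by
    have hcv : starRingEnd ℂ v = u := by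
      rw [hv, Complex.conj_conj, hu]
    have hcu : starRingEnd ℂ u = v := by
      rw [hv, hu]
    rw [mirror1, alphaPar, betaPar, ← hv, ← hu, ← htt]
    simp only [map_mul, map_sub, map_pow]
    rw [hcv, hcu, htt, hs, htt]
  have hf : (R3S p τ * R1S p τ).mulVec (Pi.single 1 1) = ![v * t, v ^ 2, -1] := by
    rw [e3S, ← hr₁, ← Units.val_mul, e31]
    ext i
    fin_cases i <;> simp
  rw [hf, hm1]
  generalize hK : Subgroup.closure (mirrorStab (Subgroup.closure {r₁, j})
    (LinearMap.ker (lfun (2 - u ^ 3 - v ^ 3) ((v ^ 2 - u) * t) ((u ^ 2 - v) * (-1 - t)))) ∪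
      mirrorStab (Subgroup.closure {r₁, j})
        (Submodule.span ℂ {Pi.single 0 1, ![v * t, v ^ 2, -1]})) = K
  have k1 : r₁ ∈ K := by
    rw [← hK]
    refine Subgroup.subset_closure (Or.inl ⟨s1, map_ker_lfun _ _ _ _ (u ^ 2) _ e1 ?_ ?_ ?_⟩)
    all_goals
      simp
      grind
  have kq : q ∈ K := by
    rw [← hK]
    refine Subgroup.subset_closure (Or.inl ⟨sq, map_ker_lfun _ _ _ _ (-1) _ eq ?_ ?_ ?_⟩)
    all_goals
      simp
      try grind
  have kr : r ∈ K := by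
    rw [← hK]
    refine Subgroup.subset_closure (Or.inl ⟨sr, map_ker_lfun _ _ _ _ (-1) _ er ?_ ?_ ?_⟩)
    all_goals
      simp
      try grind
  have ka : a ∈ K := by
    rw [← hK]
    refine Subgroup.subset_closure (Or.inr ⟨sa, map_span_pair _ _ _ v 1 0 (u ^ 2) ?_ ?_⟩)
    · rw [ea]
      ext i
      fin_cases i <;> simp <;> ring
    · rw [ea]
      ext i
      fin_cases i <;> simp [Matrix.mulVec, dotProduct, Fin.sum_univ_three] <;> grind
  have k2 : r₂ ∈ K := by
    rw [eq_mul_inv_of_mul_eq rel2.symm]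
    exact mul_mem (mul_mem (mul_mem ka (mul_mem kr kq)) ka) (inv_mem (mul_mem ka (mul_mem kr kq)))
  have k3 : r₃ ∈ K := by
    rw [eq_inv_mul_of_mul_eq rel3, hc]
    exact mul_mem (inv_mem ka) (mul_mem (mul_mem (mul_mem k1 k2) (inv_mem k1)) ka)
  have kj : j ∈ K := by
    rw [eq_inv_of_mul_eq_one_right relj]
    have kP := mul_mem (mul_mem k1 k2) k3
    exact inv_mem (mul_mem (mul_mem kP kP) k1)
  rw [Subgroup.closure_le]
  rintro g (rfl | hg)
  · exact k1
  · rw [Set.mem_singleton_iff] at hg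
    rw [hg]
    exact kj
end

section
/- Let τ = exp(−iπ/9)·(√5 + i·√3)/2 and p = 4. Then the lattice S(p,τ) is generated by the union of two mirror stabilizers: the subgroup of GL(3,ℂ) generated by Stab(m₁) ∪ Stab(m₂) equals S(p,τ), where m₁ is the mirror of the complex reflection R₁ and m₂ = span_ℂ{e₁, R₂·e₃} is the mirror of the complex reflection (R₁·R₂R₃R₂⁻¹)⁵. -/
open Matrix

theorem braid_aux {V : Type*} [Ring V] [Algebra ℂ V] (X Y : V) (k m : ℂ)
    (hX : X * X = k • X) (hY : Y * Y = k • Y)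
    (hXY : X * Y * X = m • X) (hYX : Y * X * Y = m • Y) :
    (1 + X) * (1 + Y) * (1 + X) * (1 + Y) =
      1 + (2 + k + m) • X + (2 + k + m) • Y + (3 + 2 * k + m) • (X * Y) + Y * X := by
  have h1 : (1 + X) * (1 + Y) * (1 + X) = 1 + (2 + k + m) • X + Y + X * Y + Y * X := by
    have : (1 + X) * (1 + Y) * (1 + X) = 1 + X + X + X * X + Y + X * Y + Y * X + X * Y * X := by
      noncomm_ring
    rw [this, hX, hXY]
    module
  rw [h1]
  have : (1 + (2 + k + m) • X + Y + X * Y + Y * X) * (1 + Y) =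
      1 + (2 + k + m) • X + Y + X * Y + Y * X + Y + (2 + k + m) • (X * Y) + Y * Y
        + X * (Y * Y) + Y * X * Y := by
    simp only [mul_add, add_mul, mul_one, one_mul, smul_mul_assoc, mul_assoc]
    abel
  rw [this, hY, hYX, mul_smul_comm]
  module

theorem braid4_aux {V : Type*} [Ring V] [Algebra ℂ V] (X Y : V) (k m : ℂ)
    (hX : X * X = k • X) (hY : Y * Y = k • Y)
    (hXY : X * Y * X = m • X) (hYX : Y * X * Y = m • Y) (hm : m = -2 - 2 * k) :
    (1 + X) * (1 + Y) * (1 + X) * (1 + Y) = (1 + Y) * (1 + X) * (1 + Y) * (1 + X) := by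
  rw [braid_aux X Y k m hX hY hXY hYX, braid_aux Y X k m hY hX hYX hXY, hm]
  module

theorem braid5_aux {V : Type*} [Ring V] [Algebra ℂ V] (X Y : V) (k m : ℂ)
    (hX : X * X = k • X) (hY : Y * Y = k • Y)
    (hXY : X * Y * X = m • X) (hYX : Y * X * Y = m • Y)
    (hm : (1 + k) ^ 2 + 3 * m * (1 + k) + m ^ 2 = 0) :
    (1 + X) * (1 + Y) * (1 + X) * (1 + Y) * (1 + X) =
      (1 + Y) * ((1 + X) * (1 + Y) * (1 + X) * (1 + Y)) := by
  rw [braid_aux X Y k m hX hY hXY hYX]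
  have e1 : (1 + (2 + k + m) • X + (2 + k + m) • Y + (3 + 2 * k + m) • (X * Y) + Y * X) * (1 + X)
      = 1 + (2 + k + m) • X + (2 + k + m) • Y + (3 + 2 * k + m) • (X * Y) + Y * X
        + X + (2 + k + m) • (X * X) + (2 + k + m) • (Y * X) + (3 + 2 * k + m) • (X * Y * X)
        + Y * (X * X) := by
    simp only [mul_add, add_mul, mul_one, one_mul, smul_mul_assoc, mul_assoc]
    abel
  have e2 : (1 + Y) * (1 + (2 + k + m) • X + (2 + k + m) • Y + (3 + 2 * k + m) • (X * Y) + Y * X)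
      = 1 + (2 + k + m) • X + (2 + k + m) • Y + (3 + 2 * k + m) • (X * Y) + Y * X
        + Y + (2 + k + m) • (Y * X) + (2 + k + m) • (Y * Y) + (3 + 2 * k + m) • (Y * X * Y)
        + (Y * Y) * X := by
    simp only [mul_add, add_mul, mul_one, one_mul, mul_smul_comm, mul_assoc, smul_add]
    abel
  rw [e1, e2, hX, hY, hXY, hYX, mul_smul_comm, smul_mul_assoc, ← sub_eq_zero]
  have : ∀ Z : V, ((1 + k) ^ 2 + 3 * m * (1 + k) + m ^ 2) • Z = 0 := fun Z => by rw [hm, zero_smul]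
  rw [← this (X - Y)]
  module

theorem vmv_sq (a b : Fin 3 → ℂ) (k : ℂ) (h : b ⬝ᵥ a = k) :
    vecMulVec a b * vecMulVec a b = k • vecMulVec a b := by
  rw [vecMulVec_mul_vecMulVec, h]
  ext i j
  simp [vecMulVec_apply]
  ring

theorem vmv_tri (a b c d : Fin 3 → ℂ) (m : ℂ) (h : (b ⬝ᵥ c) * (d ⬝ᵥ a) = m) :
    vecMulVec a b * vecMulVec c d * vecMulVec a b = m • vecMulVec a b := by
  rw [vecMulVec_mul_vecMulVec, vecMulVec_mul_vecMulVec, ← h]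
  ext i j
  simp [vecMulVec_apply, smul_dotProduct]
  ring

theorem map_eq_of_le (g : GL (Fin 3) ℂ) (m : Submodule ℂ (Fin 3 → ℂ))
    (h : ∀ x ∈ m, (g : Matrix (Fin 3) (Fin 3) ℂ).mulVec x ∈ m) :
    m.map (Matrix.mulVecLin (g : Matrix (Fin 3) (Fin 3) ℂ)) = m := by
  apply Submodule.eq_of_le_of_finrank_eq
  · rintro _ ⟨x, hx, rfl⟩
    exact h x hx
  · refine (LinearEquiv.finrank_eq (Submodule.equivMapOfInjective _ ?_ m)).symm
    intro x y hxy
    have := congrArg ((g⁻¹ : GL (Fin 3) ℂ) : Matrix (Fin 3) (Fin 3) ℂ).mulVec hxy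
    simpa [Matrix.mulVec_mulVec, ← Units.val_mul] using this

theorem one_add_vmv (c a₀ a₁ a₂ b₀ b₁ b₂ : ℂ) :
    c • (1 + vecMulVec ![a₀, a₁, a₂] ![b₀, b₁, b₂]) =
      !![c * (1 + a₀ * b₀), c * (a₀ * b₁), c * (a₀ * b₂);
         c * (a₁ * b₀), c * (1 + a₁ * b₁), c * (a₁ * b₂);
         c * (a₂ * b₀), c * (a₂ * b₁), c * (1 + a₂ * b₂)] := by
  ext i j
  fin_cases i <;> fin_cases j <;> simp [vecMulVec_apply]

theorem fin3_ext (a b c d e f g h i a' b' c' d' e' f' g' h' i' : ℂ)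
    (ha : a = a') (hb : b = b') (hc : c = c') (hd : d = d') (he : e = e') (hf : f = f')
    (hg : g = g') (hh : h = h') (hi : i = i') :
    !![a, b, c; d, e, f; g, h, i] = !![a', b', c'; d', e', f'; g', h', i'] := by
  subst_vars; rfl

theorem matA (u c τ t : ℂ) (huc : u * c = 1) :
    !![u ^ 2, τ, -u * t; 0, c, 0; 0, 0, c] =
      c • (1 + vecMulVec ![1, 0, 0] ![u ^ 3 - 1, u * τ, -u ^ 2 * t]) := by
  rw [one_add_vmv]
  apply fin3_ext
  · linear_combination (-u ^ 2) * huc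
  · linear_combination (-τ) * huc
  · linear_combination (u * t) * huc
  all_goals ring

theorem matC (u c τ t : ℂ) (huc : u * c = 1) :
    Jmat * Jmat * !![u ^ 2, τ, -u * t; 0, c, 0; 0, 0, c] * Jmat =
      c • (1 + vecMulVec ![0, 0, 1] ![u * τ, -u ^ 2 * t, u ^ 3 - 1]) := by
  rw [one_add_vmv]
  simp only [Jmat, Matrix.mul_fin_three]
  apply fin3_ext
  · ring
  · ring
  · ring
  · ring
  · ring
  · ring
  · linear_combination (-τ) * huc
  · linear_combination (u * t) * huc
  · linear_combination (-u ^ 2) * huc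

theorem matB (u c τ t : ℂ) (huc : u * c = 1) :
    (c • (1 + vecMulVec ![0, τ, c] ![u ^ 2 * τ - u ^ 2 * t ^ 2, -t, u ^ 4 - u + u * τ * t])) *
      (Jmat * !![u ^ 2, τ, -u * t; 0, c, 0; 0, 0, c] * Jmat) =
    (Jmat * !![u ^ 2, τ, -u * t; 0, c, 0; 0, 0, c] * Jmat) *
      !![u ^ 2, τ, -u * t; 0, c, 0; 0, 0, c] := by
  have hJ : Jmat * !![u ^ 2, τ, -u * t; 0, c, 0; 0, 0, c] * Jmat =
      !![0, c, 0; τ, -u * t, u ^ 2; c, 0, 0] := by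
    simp only [Jmat, Matrix.mul_fin_three]
    apply fin3_ext <;> ring
  rw [one_add_vmv, hJ]
  simp only [Matrix.mul_fin_three]
  have hc : c = u⁻¹ := eq_inv_of_mul_eq_one_right huc
  have hu : u ≠ 0 := left_ne_zero_of_mul_eq_one huc
  subst hc
  apply fin3_ext <;> field_simp <;> ring

theorem u_facts : uPar 4 * starRingEnd ℂ (uPar 4) = 1 ∧ uPar 4 ^ 3 = Complex.I := by
  constructor
  · rw [Complex.mul_conj, uPar]
    have : (2 * Real.pi * Complex.I / (3 * (4 : ℕ)) : ℂ) = (Real.pi / 6 : ℝ) * Complex.I := by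
      push_cast; ring
    rw [this, Complex.normSq_eq_norm_sq, Complex.norm_exp_ofReal_mul_I]
    simp
  · rw [uPar, ← Complex.exp_nat_mul]
    have : ((3 : ℕ) * (2 * Real.pi * Complex.I / (3 * (4 : ℕ))) : ℂ) = Real.pi / 2 * Complex.I := by
      push_cast; ring
    rw [this, Complex.exp_pi_div_two_mul_I]

theorem tau_facts (τ : ℂ) (hτ : τ = Complex.exp (-(Real.pi * Complex.I) / 9) *
        ((Real.sqrt 5 + Complex.I * Real.sqrt 3) / 2)) :
    τ * starRingEnd ℂ τ = 2 ∧ τ ^ 3 + starRingEnd ℂ τ ^ 3 = (9 - Real.sqrt 5) / 2 := by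
  have h5 : (Real.sqrt 5 : ℂ) ^ 2 = 5 := by
    rw [← Complex.ofReal_pow, Real.sq_sqrt (by norm_num)]; norm_num
  have h3 : (Real.sqrt 3 : ℂ) ^ 2 = 3 := by
    rw [← Complex.ofReal_pow, Real.sq_sqrt (by norm_num)]; norm_num
  have hI := Complex.I_sq
  set E := Complex.exp (-(Real.pi * Complex.I) / 9) with hE
  have hE1 : E * starRingEnd ℂ E = 1 := by
    rw [hE, ← Complex.exp_conj, ← Complex.exp_add]
    simp [map_ofNat]
    ring_nf
    simp
  have hE3 : E ^ 3 = (1 - Complex.I * Real.sqrt 3) / 2 := by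
    rw [hE, ← Complex.exp_nat_mul]
    have : ((3 : ℕ) * (-(Real.pi * Complex.I) / 9) : ℂ) = ((-(Real.pi / 3) : ℝ) : ℂ) * Complex.I := by
      push_cast; ring
    rw [this, Complex.exp_mul_I, ← Complex.ofReal_cos, ← Complex.ofReal_sin, Real.cos_neg,
      Real.sin_neg, Real.cos_pi_div_three, Real.sin_pi_div_three]
    push_cast; ring
  have hE3' : starRingEnd ℂ E ^ 3 = (1 + Complex.I * Real.sqrt 3) / 2 := by
    rw [← map_pow, hE3]
    simp [map_ofNat]
  have hc : starRingEnd ℂ τ = starRingEnd ℂ E * ((Real.sqrt 5 - Complex.I * Real.sqrt 3) / 2) := by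
    rw [hτ]; simp only [map_mul, map_div₀, map_add, map_ofNat, Complex.conj_ofReal, Complex.conj_I]; ring
  rw [hc, hτ]
  generalize starRingEnd ℂ E = E' at *
  generalize (Real.sqrt 5 : ℂ) = a at *
  generalize (Real.sqrt 3 : ℂ) = b at *
  generalize Complex.I = i at *
  have hib : (i * b) ^ 2 = -3 := by rw [mul_pow, hI, h3]; ring
  constructor
  · linear_combination (a ^ 2 - (i * b) ^ 2) / 4 * hE1 + h5 / 4 - hib / 4
  · rw [mul_pow, mul_pow, hE3, hE3']
    generalize i * b = w at *
    have hw3 : w ^ 3 = -3 * w := by linear_combination w * hib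
    have ha3 : a ^ 3 = 5 * a := by linear_combination a * h5
    have e : (1 - w) / 2 * ((a + w) / 2) ^ 3 + (1 + w) / 2 * ((a - w) / 2) ^ 3
      = (a ^ 3 + 3 * a * w ^ 2 - w * (3 * a ^ 2 * w + w ^ 3)) / 8 := by ring
    rw [e, hw3, ha3]
    linear_combination (3 * a + 3 - 3 * a ^ 2) / 8 * hib + 9 / 8 * h5

/-- For `τ = exp(−iπ/9)·(√5+i√3)/2` and `p = 4`, the lattice `S(p,τ)` is generated
by the union of the stabilizers of the mirror of `R₁` and of the mirror
`span{e₁, R₂·e₃}` of the complex reflection `(R₁·R₂R₃R₂⁻¹)⁵`. -/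
theorem stmt15 (p : ℕ) (hp : p = 4)
    (τ : ℂ)
    (hτ : τ = Complex.exp (-(Real.pi * Complex.I) / 9) *
        ((Real.sqrt 5 + Complex.I * Real.sqrt 3) / 2))
    (r₁ j : GL (Fin 3) ℂ)
    (hr₁ : (↑r₁ : Matrix (Fin 3) (Fin 3) ℂ) = R1S p τ)
    (hj : (↑j : Matrix (Fin 3) (Fin 3) ℂ) = Jmat) :
    Subgroup.closure
        (mirrorStab (Subgroup.closure {r₁, j}) (mirror1 p τ) ∪
          mirrorStab (Subgroup.closure {r₁, j})
            (Submodule.span ℂ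
              {Pi.single 0 1, (R2S p τ).mulVec (Pi.single 2 1)})) =
      Subgroup.closure {r₁, j} := by
  subst hp
  obtain ⟨huc, hu3⟩ := u_facts
  obtain ⟨htt, ht3⟩ := tau_facts τ hτ
  clear hτ
  have h5 : (Real.sqrt 5 : ℂ) ^ 2 = 5 := by
    rw [← Complex.ofReal_pow, Real.sq_sqrt (by norm_num)]; norm_num
  have hI := Complex.I_sq
  have hu6 : uPar 4 ^ 6 = -1 := by
    rw [show uPar 4 ^ 6 = (uPar 4 ^ 3) ^ 2 by ring, hu3, hI]
  have hm1 : ∀ x : Fin 3 → ℂ, x ∈ mirror1 4 τ ↔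
      (R1S 4 τ).mulVec x = starRingEnd ℂ (uPar 4) • x := by
    intro x
    have hne : starRingEnd ℂ (uPar 4) ^ 2 - uPar 4 ≠ 0 := by
      intro h
      have h' : uPar 4 ^ 3 = 1 := by
        linear_combination (-uPar 4 ^ 2) * h + (uPar 4 * starRingEnd ℂ (uPar 4) + 1) * huc
      rw [hu3] at h'
      exact absurd (congrArg Complex.im h') (by simp)
    have key : lfun (alphaPar 4) (betaPar 4 τ) (starRingEnd ℂ (betaPar 4 τ)) x =
        (starRingEnd ℂ (uPar 4) ^ 2 - uPar 4) * ((uPar 4 ^ 2 - starRingEnd ℂ (uPar 4)) * x 0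
          + τ * x 1 - uPar 4 * starRingEnd ℂ τ * x 2) := by
      simp [lfun, alphaPar, betaPar]
      generalize starRingEnd ℂ (uPar 4) = c at *
      generalize starRingEnd ℂ τ = t at *
      generalize uPar 4 = u at *
      linear_combination (-(u * c + 2) * x 0 + c * t * x 2) * huc
    rw [mirror1, LinearMap.mem_ker, key, mul_eq_zero, or_iff_right hne]
    constructor
    · intro h
      ext i
      fin_cases i
      · simp [R1S, Matrix.mulVec, dotProduct, Fin.sum_univ_three]
        linear_combination h
      · simp [R1S, Matrix.mulVec, dotProduct, Fin.sum_univ_three]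
      · simp [R1S, Matrix.mulVec, dotProduct, Fin.sum_univ_three]
    · intro h
      have h0 := congrFun h 0
      simp [R1S, Matrix.mulVec, dotProduct, Fin.sum_univ_three] at h0
      linear_combination h0
  have hm1stab : ∀ g : GL (Fin 3) ℂ, g * r₁ = r₁ * g →
      (mirror1 4 τ).map (Matrix.mulVecLin (g : Matrix (Fin 3) (Fin 3) ℂ)) = mirror1 4 τ := by
    intro g hg
    apply map_eq_of_le
    intro x hx
    rw [hm1] at hx ⊢
    have hg' := congrArg (Units.val) hg
    rw [Units.val_mul, Units.val_mul, hr₁] at hg'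
    rw [Matrix.mulVec_mulVec, ← hg', ← Matrix.mulVec_mulVec, hx, Matrix.mulVec_smul]
  -- the third reflection and its conjugate
  set c := starRingEnd ℂ (uPar 4) with hc
  set t := starRingEnd ℂ τ with ht
  set u := uPar 4 with hu
  set S := Subgroup.closure {r₁, j} with hS
  have hrS : r₁ ∈ S := Subgroup.subset_closure (by simp)
  have hjS : j ∈ S := Subgroup.subset_closure (by simp)
  have hj3 : j * j * j = 1 := by
    apply Units.ext
    simp only [Units.val_mul, hj, Units.val_one]
    ext a b
    fin_cases a <;> fin_cases b <;> simp [Jmat, Matrix.mul_apply, Fin.sum_univ_three]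
  have hjinv : j⁻¹ = j * j := inv_eq_of_mul_eq_one_left hj3
  let X : Matrix (Fin 3) (Fin 3) ℂ := vecMulVec ![1, 0, 0] ![u ^ 3 - 1, u * τ, -u ^ 2 * t]
  let Z : Matrix (Fin 3) (Fin 3) ℂ := vecMulVec ![0, 0, 1] ![u * τ, -u ^ 2 * t, u ^ 3 - 1]
  let Y : Matrix (Fin 3) (Fin 3) ℂ :=
    vecMulVec ![0, τ, c] ![u ^ 2 * τ - u ^ 2 * t ^ 2, -t, u ^ 4 - u + u * τ * t]
  have hrX : (↑r₁ : Matrix (Fin 3) (Fin 3) ℂ) = c • (1 + X) := by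
    rw [hr₁]
    exact matA u c τ t huc
  let r₃ : GL (Fin 3) ℂ := j * j * r₁ * j
  have hr3 : (↑r₃ : Matrix (Fin 3) (Fin 3) ℂ) = c • (1 + Z) := by
    simp only [r₃, Units.val_mul, hj, hr₁]
    exact matC u c τ t huc
  let g : GL (Fin 3) ℂ := j * r₁ * j
  let b : GL (Fin 3) ℂ := g * r₁ * g⁻¹
  have hb : (↑b : Matrix (Fin 3) (Fin 3) ℂ) = c • (1 + Y) := by
    have h : (c • (1 + Y)) * (↑g : Matrix (Fin 3) (Fin 3) ℂ) = (↑g : Matrix (Fin 3) (Fin 3) ℂ) * (↑r₁ : Matrix (Fin 3) (Fin 3) ℂ) := by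
      simp only [g, Units.val_mul, hj, hr₁]
      exact matB u c τ t huc
    have h2 : (↑b : Matrix (Fin 3) (Fin 3) ℂ) =
        (↑g : Matrix (Fin 3) (Fin 3) ℂ) * (↑r₁ : Matrix (Fin 3) (Fin 3) ℂ) *
          ((g⁻¹ : GL (Fin 3) ℂ) : Matrix (Fin 3) (Fin 3) ℂ) := by
      simp only [b, Units.val_mul]
    rw [h2, ← h, mul_assoc, ← Units.val_mul, mul_inv_cancel, Units.val_one, mul_one]
  have hb4 : r₁ * r₃ * r₁ * r₃ = r₃ * r₁ * r₃ * r₁ := by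
    apply Units.ext
    simp only [Units.val_mul, hrX, hr3, smul_mul_assoc, mul_smul_comm]
    rw [braid4_aux X Z (u ^ 3 - 1) (-2 * u ^ 3)]
    · apply vmv_sq
      simp [dotProduct, Fin.sum_univ_three]
    · apply vmv_sq
      simp [dotProduct, Fin.sum_univ_three]
    · apply vmv_tri
      simp [dotProduct, Fin.sum_univ_three]
      linear_combination (u ^ 3) * htt
    · apply vmv_tri
      simp [dotProduct, Fin.sum_univ_three]
      linear_combination (u ^ 3) * htt
    · ring
  have hm : (u ^ 3 * τ ^ 3 + u ^ 3 * t ^ 3 - 6 * u ^ 3) = u ^ 3 * ((-3 - Real.sqrt 5) / 2) := by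
    linear_combination u ^ 3 * ht3
  have E1 : (u * τ * τ + -(u ^ 2 * t * c)) * (u ^ 2 * τ - u ^ 2 * t ^ 2) -
      (u ^ 3 * τ ^ 3 + u ^ 3 * t ^ 3 - 6 * u ^ 3) = 0 := by
    linear_combination (-(u ^ 3 * τ * t) + u ^ 3 * t ^ 3) * huc - u ^ 3 * (τ * t + 2 + 1) * htt
  have hb5 : r₁ * b * r₁ * b * r₁ = b * (r₁ * b * r₁ * b) := by
    apply Units.ext
    simp only [Units.val_mul, hrX, hb, smul_mul_assoc, mul_smul_comm]
    rw [braid5_aux X Y (u ^ 3 - 1) (u ^ 3 * ((-3 - Real.sqrt 5) / 2))]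
    · apply vmv_sq
      simp [dotProduct, Fin.sum_univ_three]
    · apply vmv_sq
      simp [dotProduct, Fin.sum_univ_three]
      linear_combination (u ^ 3 - 1 + τ * t) * huc
    · apply vmv_tri
      simp [dotProduct, Fin.sum_univ_three]
      linear_combination hm + E1
    · apply vmv_tri
      simp [dotProduct, Fin.sum_univ_three]
      linear_combination hm + E1
    · linear_combination u ^ 6 / 4 * h5
  have hrm2 : (Submodule.span ℂ {Pi.single 0 1, (R2S 4 τ).mulVec (Pi.single 2 1)}).map
      (Matrix.mulVecLin (r₁ : Matrix (Fin 3) (Fin 3) ℂ)) =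
      Submodule.span ℂ {Pi.single 0 1, (R2S 4 τ).mulVec (Pi.single 2 1)} := by
    apply map_eq_of_le
    intro x hx
    have : (r₁ : Matrix (Fin 3) (Fin 3) ℂ).mulVec x = c • x +
        (c * (![u ^ 3 - 1, u * τ, -u ^ 2 * t] ⬝ᵥ x)) • (Pi.single 0 1 : Fin 3 → ℂ) := by
      rw [hrX]
      ext i
      fin_cases i <;>
        simp [X, Matrix.mulVec, dotProduct, Fin.sum_univ_three, vecMulVec_apply]
      ring
    rw [this]
    exact add_mem (Submodule.smul_mem _ _ hx)
      (Submodule.smul_mem _ _ (Submodule.subset_span (by simp)))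
  have hbm2 : (Submodule.span ℂ {Pi.single 0 1, (R2S 4 τ).mulVec (Pi.single 2 1)}).map
      (Matrix.mulVecLin (b : Matrix (Fin 3) (Fin 3) ℂ)) =
      Submodule.span ℂ {Pi.single 0 1, (R2S 4 τ).mulVec (Pi.single 2 1)} := by
    apply map_eq_of_le
    intro x hx
    have : (b : Matrix (Fin 3) (Fin 3) ℂ).mulVec x = c • x +
        (c * (![u ^ 2 * τ - u ^ 2 * t ^ 2, -t, u ^ 4 - u + u * τ * t] ⬝ᵥ x)) •
          ((R2S 4 τ).mulVec (Pi.single 2 1)) := by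
      rw [hb]
      ext i
      fin_cases i <;>
        simp [Y, R2S, Matrix.mulVec, dotProduct, Fin.sum_univ_three, vecMulVec_apply, ← hc]
      all_goals ring
    rw [this]
    exact add_mem (Submodule.smul_mem _ _ hx)
      (Submodule.smul_mem _ _ (Submodule.subset_span (by simp)))
  apply le_antisymm
  · rw [Subgroup.closure_le]
    rintro x (hx | hx)
    · exact hx.1
    · exact hx.1
  have hgS : g ∈ S := mul_mem (mul_mem hjS hrS) hjS
  have hbS : b ∈ S := mul_mem (mul_mem hgS hrS) (inv_mem hgS)
  have hr3S : r₃ ∈ S := mul_mem (mul_mem (mul_mem hjS hjS) hrS) hjS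
  set K := Subgroup.closure
        (mirrorStab S (mirror1 4 τ) ∪
          mirrorStab S
            (Submodule.span ℂ
              {Pi.single 0 1, (R2S 4 τ).mulVec (Pi.single 2 1)})) with hK
  have hcomm : ∀ y ∈ S, y * r₁ = r₁ * y → y ∈ K := fun y hy h =>
    Subgroup.subset_closure (Or.inl ⟨hy, hm1stab y h⟩)
  have hrK : r₁ ∈ K := hcomm _ hrS rfl
  have hbK : b ∈ K := Subgroup.subset_closure (Or.inr ⟨hbS, hbm2⟩)
  have hxK : r₁ * b * r₁ * b ∈ K := mul_mem (mul_mem (mul_mem hrK hbK) hrK) hbK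
  have hxS : r₁ * b * r₁ * b ∈ S := mul_mem (mul_mem (mul_mem hrS hbS) hrS) hbS
  have hyK : g⁻¹ * (r₁ * b * r₁ * b) ∈ K := by
    apply hcomm _ (mul_mem (inv_mem hgS) hxS)
    rw [mul_assoc, hb5]
    have : g⁻¹ * b = r₁ * g⁻¹ := by simp only [b]; group
    rw [← mul_assoc, this, mul_assoc]
  have hgK : g ∈ K := by
    have := mul_mem hxK (inv_mem hyK)
    rwa [_root_.mul_inv_rev, inv_inv, mul_inv_cancel_left] at this
  have hsK : r₃ * r₁ * r₃ ∈ K := by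
    apply hcomm _ (mul_mem (mul_mem hr3S hrS) hr3S)
    rw [← hb4]; group
  have hjK : j ∈ K := by
    have h : j * (r₃ * r₁ * r₃) = r₁ * g * g := by
      simp only [r₃, g]
      have : j * (j * j * r₁ * j * r₁ * (j * j * r₁ * j)) =
        (j * j * j) * r₁ * j * r₁ * (j * j * r₁ * j) := by group
      rw [this, hj3]; group
    have h2 : j = r₁ * g * g * (r₃ * r₁ * r₃)⁻¹ := by rw [← h]; group
    rw [h2]
    exact mul_mem (mul_mem (mul_mem hrK hgK) hgK) (inv_mem hsK)
  rw [hS, Subgroup.closure_le]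
  rintro x (rfl | rfl)
  · exact hrK
  · exact hjK
end
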